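/- arXiv:1904.05051 — 2 statements merged into one kernel-verified Lean document; each statement's English description precedes it below -/
import Mathlib

section
/- Assume the abc-conjecture. Let F(U,V) ∈ ℤ[U,V] be a nonzero homogeneous polynomial of degree r without repeated irreducible factors (i.e., squarefree), and let q ≥ 2 be an integer. Then for every ε > 0 there exists a constant c > 0, depending only on F, q and ε, such that for all coprime integers u, v with F(u,v) ≠ 0, the product of the distinct primes p with p^q dividing F(u,v) is at most c · max(|u|,|v|)^{(2+ε)/(q−1)}. -/
/-- The radical of a natural number: the product of its distinct prime factors. -/
def radNat (m : ℕ) : ℕ := ∏ p ∈ m.primeFactors, p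

/-- The abc-conjecture. -/
def ABCConjecture : Prop :=
  ∀ ε : ℝ, 0 < ε → ∃ K : ℝ, 0 < K ∧
    ∀ a b c : ℕ, 0 < a → 0 < b → 0 < c → Nat.Coprime a b → a + b = c →
      (c : ℝ) ≤ K * (radNat (a * b * c) : ℝ) ^ ((1 : ℝ) + ε)

/-!
Fix `F` of degree `r` and put `H = max (|u|, |v|)`. If `P` is the product of the primes whose
`q`-th power divides `F (u, v)`, then `P ^ (q - 1) * rad (F (u, v)) ≤ |F (u, v)| ≪ H ^ r`, so it
suffices that the abc-conjecture gives `H ^ (r - 2 - ε) ≪ rad (F (u, v))` for every squarefree `F`.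

Dehomogenizing, this becomes a statement `ABCBound f` about a finite set of algebraic points on the
projective line, the zeros of a polynomial `f` over `ℚ` together with the point at infinity: for
`t = u / v`, the product of the primes modulo which `t` meets one of the points is
`≫ H(t) ^ (number of points - 2 - ε)`. The abc-conjecture is the case of the points `0, 1, ∞`.

The general case is reached by Belyi's argument. If `ABCBound g` holds and `φ` is a polynomial map
all of whose critical values are zeros of `g`, then the bound holds for the full preimage of
`{g = 0} ∪ {∞}`, because `H(φ t) ≍ H(t) ^ deg φ` and the Riemann-Hurwitz count of points matches
exactly; moreover a bound for a point set implies the bound for its subsets. An arbitrary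
Galois-stable finite set is carried into a set of rational points by repeatedly applying the minimal
polynomials of its members, and rational points are merged down to two finite ones by maps
`(x - a) ^ m * (x - b) ^ n`. All maps involved are polynomials, so the point at infinity stays in
the set throughout.
-/

open Polynomial UniqueFactorizationMonoid Height
open EuclideanDomain (divRadical divRadical_mul_radical radical_mul_divRadical)

/-! ### Heights of polynomial values -/

section Heights

variable {K : Type*} [Field K] [AdmissibleAbsValues K]

lemma mulHeight_eval_toTupleMvPolynomial (f : K[X]) (x : K) :
    mulHeight (fun j ↦ (f.toTupleMvPolynomial j).eval ![x, 1]) = mulHeight₁ (f.eval x) := by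
  have h : (fun j ↦ (f.toTupleMvPolynomial j).eval ![x, 1]) = ![f.eval x, 1] := by
    ext j
    fin_cases j <;> simp [toTupleMvPolynomial, eval_homogenize]
  rw [h, mulHeight₁_eq_mulHeight]

lemma exists_mulHeight₁_eval_le (f : K[X]) :
    ∃ C > 0, ∀ x : K, mulHeight₁ (f.eval x) ≤ C * mulHeight₁ x ^ f.natDegree := by
  obtain ⟨C, hC, h⟩ := mulHeight_eval_le' f.isHomogeneous_toTupleMvPolynomial
  refine ⟨C, hC, fun x ↦ ?_⟩
  rw [← mulHeight_eval_toTupleMvPolynomial, mulHeight₁_eq_mulHeight x]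
  exact h _

/-- The homogenized Euclidean division of `X ^ (2 * d)` by `f` (of degree `d`), together with
`X 1 ^ (2 * d)`, exhibits the Nullstellensatz certificate that bounds the height from below. -/
lemma exists_mul_mulHeight₁_pow_le (f : K[X]) :
    ∃ C > 0, ∀ x : K, C * mulHeight₁ x ^ f.natDegree ≤ mulHeight₁ (f.eval x) := by
  set d := f.natDegree with hd
  obtain rfl | hf := eq_or_ne f 0
  · exact ⟨1, one_pos, fun x ↦ by simp [hd]⟩
  set quo : K[X] := X ^ (d + d) / f
  set rem : K[X] := X ^ (d + d) % f
  have hdivision : f * quo + rem = X ^ (d + d) := EuclideanDomain.div_add_mod _ _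
  have hquo : quo.natDegree ≤ d := by
    have h : f.degree + quo.degree = (X ^ (d + d) : K[X]).degree :=
      degree_add_div hf <| by
        rw [degree_eq_natDegree hf, degree_X_pow, ← hd]
        exact_mod_cast Nat.le_add_left d d
    rw [degree_eq_natDegree hf, degree_X_pow, ← hd, Nat.cast_add] at h
    exact natDegree_le_of_degree_le (WithBot.le_of_add_le_add_left (WithBot.natCast_ne_bot _) h.le)
  have hrem : rem.natDegree ≤ d := natDegree_le_natDegree (degree_mod_lt _ hf).le
  let q : Fin 2 × Fin 2 → MvPolynomial (Fin 2) K := fun a ↦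
    ![![quo.homogenize d, rem.homogenize d], ![0, MvPolynomial.X 1 ^ d]] a.1 a.2
  have hq : ∀ a, (q a).IsHomogeneous d := by
    rintro ⟨i, j⟩
    fin_cases i <;> fin_cases j <;>
      simp [q, MvPolynomial.isHomogeneous_zero, MvPolynomial.isHomogeneous_X_pow]
  obtain ⟨C, hC, h⟩ := mulHeight_eval_ge' (N := d) hq
  refine ⟨C, hC, fun x ↦ ?_⟩
  rw [← mulHeight_eval_toTupleMvPolynomial, mulHeight₁_eq_mulHeight x]
  refine h f.toTupleMvPolynomial fun k ↦ ?_
  have hx := congrArg (eval x) hdivision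
  fin_cases k
  · simpa [q, toTupleMvPolynomial, eval_homogenize, hquo, hrem, mul_comm] using hx
  · simp [q, toTupleMvPolynomial]

end Heights

/-! ### The conductor of a rational number relative to a polynomial -/

lemma radNat_eq_radical (m : ℕ) : radNat m = radical m :=
  Nat.radical_eq_prod_primeFactors.symm

lemma radical_dvd_mul_radical_of_dvd_mul_pow {M : Type*} [CommMonoidWithZero M]
    [NormalizationMonoid M] [UniqueFactorizationMonoid M] {a b n : M} {k : ℕ}
    (hnb : n * b ≠ 0) (h : a ∣ (n * b) ^ k) : radical a ∣ n * radical b :=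
  calc radical a ∣ radical ((n * b) ^ k) := radical_dvd_radical h (pow_ne_zero k hnb)
    _ ∣ radical (n * b) := radical_pow_dvd
    _ ∣ radical n * radical b := radical_mul_dvd
    _ ∣ n * radical b := mul_dvd_mul_right radical_dvd_self _

lemma num_mul_dvd (x y : ℚ) : (x * y).num ∣ x.num * y.num := by
  refine (Rat.isCoprime_num_den (x * y)).dvd_of_dvd_mul_right ?_
  rw [← Rat.mul_num_den', mul_assoc]
  exact dvd_mul_right _ _

lemma num_dvd_num_mul_mul_den (x y : ℚ) : x.num ∣ (x * y).num * y.den := by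
  refine (Rat.isCoprime_num_den x).dvd_of_dvd_mul_right ?_
  rw [mul_right_comm, Rat.mul_num_den', mul_assoc]
  exact dvd_mul_right _ _

lemma exists_den_eval_dvd (f : ℚ[X]) :
    ∃ N : ℕ, N ≠ 0 ∧ ∃ k, ∀ t : ℚ, (f.eval t).den ∣ (N * t.den) ^ k := by
  induction f using Polynomial.induction_on' with
  | add f g hf hg =>
    obtain ⟨M, hM, k, hf⟩ := hf
    obtain ⟨N, hN, l, hg⟩ := hg
    refine ⟨M * N, mul_ne_zero hM hN, k + l, fun t ↦ ?_⟩
    rw [eval_add, pow_add]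
    refine (Rat.add_den_dvd _ _).trans (mul_dvd_mul ((hf t).trans ?_) ((hg t).trans ?_))
    · exact pow_dvd_pow_of_dvd (mul_dvd_mul_right (dvd_mul_right M N) _) k
    · exact pow_dvd_pow_of_dvd (mul_dvd_mul_right (dvd_mul_left N M) _) l
  | monomial n a =>
    refine ⟨a.den, a.den_ne_zero, n + 1, fun t ↦ ?_⟩
    rw [eval_monomial, mul_pow, pow_succ' a.den, pow_succ t.den, mul_assoc]
    refine (Rat.mul_den_dvd _ _).trans (mul_dvd_mul_left _ ?_)
    rw [Rat.den_pow]
    exact (dvd_mul_right _ _).mul_left _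

/-- The product of the primes modulo which the point `t` of the projective line meets a zero of `f`
or the point at infinity. -/
noncomputable def abcConductor (f : ℚ[X]) (t : ℚ) : ℤ := radical ((f.eval t).num * t.den)

lemma abcConductor_pos (f : ℚ[X]) (t : ℚ) : 0 < abcConductor f t := Int.radical_pos _

lemma one_le_abcConductor (f : ℚ[X]) (t : ℚ) : (1 : ℝ) ≤ abcConductor f t := by
  exact_mod_cast abcConductor_pos f t

lemma abcConductor_mul_dvd {f g : ℚ[X]} {t : ℚ} (hf : f.eval t ≠ 0) (hg : g.eval t ≠ 0) :
    abcConductor (f * g) t ∣ (f.eval t).num * abcConductor g t := by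
  have hd : (t.den : ℤ) ≠ 0 := mod_cast t.den_ne_zero
  refine radical_dvd_mul_radical_of_dvd_mul_pow (k := 1) ?_ ?_
  · exact mul_ne_zero (Rat.num_ne_zero.mpr hf) (mul_ne_zero (Rat.num_ne_zero.mpr hg) hd)
  · rw [pow_one, eval_mul, ← mul_assoc]
    exact mul_dvd_mul_right (num_mul_dvd _ _) _

lemma exists_abcConductor_comp_le {g h φ : ℚ[X]} {k : ℕ} (hdvd : g.comp φ ∣ h ^ k) :
    ∃ N : ℕ, ∀ t, h.eval t ≠ 0 → abcConductor g (φ.eval t) ≤ N * abcConductor h t := by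
  obtain ⟨e, he⟩ := hdvd
  obtain ⟨M, hM, m, heval⟩ := exists_den_eval_dvd e
  obtain ⟨N, hN, n, hφ⟩ := exists_den_eval_dvd φ
  refine ⟨M * N, fun t ht ↦ ?_⟩
  have hd : (t.den : ℤ) ≠ 0 := mod_cast t.den_ne_zero
  have hMN : ((M * N : ℕ) : ℤ) ≠ 0 := mod_cast mul_ne_zero hM hN
  have hnum : (g.eval (φ.eval t)).num ∣ (h.eval t).num ^ k * (e.eval t).den := by
    have := num_dvd_num_mul_mul_den (g.eval (φ.eval t)) (e.eval t)
    rwa [← eval_comp, ← eval_mul, ← he, eval_pow, Rat.num_pow, eval_comp] at this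
  set b := (h.eval t).num * (t.den : ℤ)
  refine Int.le_of_dvd (mul_pos (by positivity) (abcConductor_pos h t)) ?_
  refine radical_dvd_mul_radical_of_dvd_mul_pow (k := k + m + n)
    (mul_ne_zero hMN (mul_ne_zero (Rat.num_ne_zero.mpr ht) hd)) ?_
  rw [pow_add, pow_add]
  refine mul_dvd_mul (hnum.trans (mul_dvd_mul ?_ ?_)) ?_
  · exact pow_dvd_pow_of_dvd ((dvd_mul_right _ _).mul_left _) k
  · refine (Int.natCast_dvd_natCast.mpr (heval t)).trans ?_
    push_cast
    exact pow_dvd_pow_of_dvd (mul_dvd_mul (dvd_mul_right _ _) (dvd_mul_left _ _)) m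
  · refine (Int.natCast_dvd_natCast.mpr (hφ t)).trans ?_
    push_cast
    exact pow_dvd_pow_of_dvd (mul_dvd_mul (dvd_mul_left _ _) (dvd_mul_left _ _)) n

/-! ### The radical bound for a set of points -/

/-- The bound on heights predicted by the abc-conjecture for the zeros of `f` together with the
point at infinity: `H(t) ^ (deg f - 1 - ε)` is at most a constant times the conductor of `t`. The
powers are moved across the inequality to avoid a truncated subtraction, so that a polynomial of
degree at most one is covered. -/
def ABCBound (f : ℚ[X]) : Prop :=
  ∀ ε : ℝ, 0 < ε → ∃ c : ℝ, 0 < c ∧ ∀ t : ℚ, f.eval t ≠ 0 →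
    mulHeight₁ t ^ f.natDegree ≤ c * abcConductor f t * mulHeight₁ t ^ (1 + ε)

lemma pow_rpow_one_add_div {x ε : ℝ} {d : ℕ} (hx : 0 < x) (hd : d ≠ 0) :
    (x ^ d) ^ (1 + ε / d) = x ^ d * x ^ ε := by
  have hd' : (d : ℝ) ≠ 0 := Nat.cast_ne_zero.mpr hd
  rw [← Real.rpow_natCast, ← Real.rpow_mul hx.le, mul_add, mul_one, mul_div_cancel₀ _ hd',
    Real.rpow_add hx]

namespace ABCBound

lemma of_natDegree_le_one {f : ℚ[X]} (hf : f.natDegree ≤ 1) : ABCBound f := by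
  refine fun ε hε ↦ ⟨1, one_pos, fun t _ ↦ ?_⟩
  have hH : 1 ≤ mulHeight₁ t := one_le_mulHeight₁ t
  have hR := one_le_abcConductor f t
  calc mulHeight₁ t ^ f.natDegree ≤ mulHeight₁ t ^ 1 := pow_le_pow_right₀ hH hf
    _ = mulHeight₁ t ^ (1 : ℝ) := by simp
    _ ≤ mulHeight₁ t ^ (1 + ε) := Real.rpow_le_rpow_of_exponent_le hH (by linarith)
    _ ≤ 1 * abcConductor f t * mulHeight₁ t ^ (1 + ε) := by
        rw [one_mul]
        exact le_mul_of_one_le_left (by positivity) hR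

lemma of_forall_eval_ne_zero {f h : ℚ[X]} (hh : h ≠ 0)
    (H : ∀ ε : ℝ, 0 < ε → ∃ c : ℝ, ∀ t : ℚ, f.eval t ≠ 0 → h.eval t ≠ 0 →
      mulHeight₁ t ^ f.natDegree ≤ c * abcConductor f t * mulHeight₁ t ^ (1 + ε)) :
    ABCBound f := by
  intro ε hε
  obtain ⟨c, hc⟩ := H ε hε
  set M : ℝ := ∑ t ∈ h.roots.toFinset, mulHeight₁ t ^ f.natDegree
  have hM : 0 ≤ M := Finset.sum_nonneg fun t _ ↦ by positivity
  refine ⟨max c (M + 1), by positivity, fun t hft ↦ ?_⟩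
  have hR := one_le_abcConductor f t
  by_cases hht : h.eval t = 0
  · have hmem : t ∈ h.roots.toFinset := by simpa [hh] using hht
    have hH : 1 ≤ mulHeight₁ t ^ (1 + ε) :=
      Real.one_le_rpow (one_le_mulHeight₁ t) (by linarith)
    calc mulHeight₁ t ^ f.natDegree ≤ M :=
          Finset.single_le_sum (f := fun t ↦ mulHeight₁ t ^ f.natDegree)
            (fun t _ ↦ by positivity) hmem
      _ ≤ max c (M + 1) * 1 * 1 := by linarith [le_max_right c (M + 1)]
      _ ≤ max c (M + 1) * abcConductor f t * mulHeight₁ t ^ (1 + ε) := by gcongr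
  · refine (hc t hft hht).trans ?_
    gcongr
    exact le_max_left _ _

lemma of_dvd {f g : ℚ[X]} (hg : ABCBound g) (hg0 : g ≠ 0) (hdvd : f ∣ g) : ABCBound f := by
  obtain ⟨e, rfl⟩ := hdvd
  have hf0 : f ≠ 0 := left_ne_zero_of_mul hg0
  have he0 : e ≠ 0 := right_ne_zero_of_mul hg0
  refine of_forall_eval_ne_zero he0 fun ε hε ↦ ?_
  obtain ⟨c, hc, hbound⟩ := hg ε hε
  obtain ⟨C, -, hheight⟩ := exists_mulHeight₁_eval_le e
  refine ⟨c * C, fun t hft het ↦ ?_⟩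
  set H := mulHeight₁ t
  have hHpos : 0 < H := mulHeight₁_pos t
  have hR := one_le_abcConductor f t
  have hcond : (abcConductor (f * e) t : ℝ) ≤ C * H ^ e.natDegree * abcConductor f t := by
    have hnum : ((e.eval t).num.natAbs : ℝ) ≤ C * H ^ e.natDegree := by
      refine le_trans ?_ (hheight t)
      rw [Rat.mulHeight₁_eq_max]
      exact_mod_cast le_max_left _ _
    have hle : abcConductor (f * e) t ≤ |(e.eval t).num| * abcConductor f t := by
      refine Int.le_of_dvd ?_ ?_
      · have := abcConductor_pos f t
        have := abs_pos.mpr (Rat.num_ne_zero.mpr het)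
        positivity
      · rw [mul_comm f e]
        exact (abcConductor_mul_dvd het hft).trans (mul_dvd_mul_right (self_dvd_abs _) _)
    calc (abcConductor (f * e) t : ℝ) ≤ (e.eval t).num.natAbs * abcConductor f t := by
          rw [Nat.cast_natAbs]
          exact_mod_cast hle
      _ ≤ C * H ^ e.natDegree * abcConductor f t := by gcongr
  refine le_of_mul_le_mul_right ?_ (pow_pos hHpos e.natDegree)
  calc H ^ f.natDegree * H ^ e.natDegree = H ^ (f * e).natDegree := by
        rw [natDegree_mul hf0 he0, pow_add]
    _ ≤ c * abcConductor (f * e) t * H ^ (1 + ε) := hbound t (by simp [hft, het])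
    _ ≤ c * (C * H ^ e.natDegree * abcConductor f t) * H ^ (1 + ε) := by gcongr
    _ = c * C * abcConductor f t * H ^ (1 + ε) * H ^ e.natDegree := by ring

/-- With `d = deg φ`, one has `H(φ t) ≍ H(t) ^ d`, so the bound survives when `h` has no more than
`d * deg g - (d - 1)` zeros. -/
lemma of_comp {g h φ : ℚ[X]} {k : ℕ} (hg : ABCBound g) (hh : h ≠ 0) (hφ : φ.natDegree ≠ 0)
    (hdvd : g.comp φ ∣ h ^ k)
    (hdeg : h.natDegree + φ.natDegree ≤ φ.natDegree * g.natDegree + 1) : ABCBound h := by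
  set d := φ.natDegree
  set n := g.natDegree
  have hcomp : g.comp φ ≠ 0 := ne_zero_of_dvd_ne_zero (pow_ne_zero k hh) hdvd
  refine of_forall_eval_ne_zero hcomp fun ε hε ↦ ?_
  obtain ⟨c, hc, hbound⟩ := hg (ε / d) (by positivity)
  obtain ⟨N, hcond⟩ := exists_abcConductor_comp_le hdvd
  obtain ⟨A, hA, hlower⟩ := exists_mul_mulHeight₁_pow_le φ
  obtain ⟨B, hB, hupper⟩ := exists_mulHeight₁_eval_le φ
  refine ⟨c * N * B ^ (1 + ε / d) / A ^ n, fun t hht hgt ↦ ?_⟩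
  rw [eval_comp] at hgt
  set H := mulHeight₁ t
  have hH : 1 ≤ H := one_le_mulHeight₁ t
  have hH0 : 0 < H := mulHeight₁_pos t
  have hR := one_le_abcConductor h t
  have hcond_le : (abcConductor g (φ.eval t) : ℝ) ≤ N * abcConductor h t :=
    mod_cast hcond t hht
  have hmain : A ^ n * H ^ (d * n) ≤
      c * N * B ^ (1 + ε / d) * abcConductor h t * (H ^ d * H ^ ε) :=
    calc A ^ n * H ^ (d * n) = (A * H ^ d) ^ n := by rw [mul_pow, pow_mul]
      _ ≤ mulHeight₁ (φ.eval t) ^ n := by gcongr; exact hlower t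
      _ ≤ c * abcConductor g (φ.eval t) * mulHeight₁ (φ.eval t) ^ (1 + ε / d) := hbound _ hgt
      _ ≤ c * (N * abcConductor h t) * (B * H ^ d) ^ (1 + ε / d) := by gcongr; exact hupper t
      _ = c * N * B ^ (1 + ε / d) * abcConductor h t * (H ^ d * H ^ ε) := by
          rw [Real.mul_rpow hB.le (by positivity), pow_rpow_one_add_div hH0 hφ]
          ring
  refine le_of_mul_le_mul_right ?_ (pow_pos hH0 d)
  calc H ^ h.natDegree * H ^ d ≤ H ^ (d * n) * H := by
        rw [← pow_add, ← pow_succ]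
        exact pow_le_pow_right₀ hH hdeg
    _ ≤ c * N * B ^ (1 + ε / d) * abcConductor h t * (H ^ d * H ^ ε) / A ^ n * H := by
        gcongr
        rwa [le_div_iff₀' (by positivity)]
    _ = c * N * B ^ (1 + ε / d) / A ^ n * abcConductor h t * H ^ (1 + ε) * H ^ d := by
        rw [Real.rpow_add hH0, Real.rpow_one]
        ring

end ABCBound

/-! ### Three points -/

lemma exists_abc_triple {u : ℤ} {v : ℕ} (hcop : Nat.Coprime u.natAbs v) (hv : 0 < v)
    (hu : u ≠ 0) (huv : u ≠ v) :
    ∃ a b c : ℕ, 0 < a ∧ 0 < b ∧ 0 < c ∧ Nat.Coprime a b ∧ a + b = c ∧ max u.natAbs v ≤ c ∧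
      a * b * c = (u * (u - v) * v).natAbs := by
  simp only [Int.natAbs_mul, Int.natAbs_natCast]
  rcases lt_or_gt_of_ne hu with hneg | hpos
  · exact ⟨u.natAbs, v, (u - v).natAbs, by omega, hv, by omega, hcop, by omega, by omega, by ring⟩
  lift u to ℕ using hpos.le
  rw [Int.natAbs_natCast] at *
  rcases lt_or_gt_of_ne huv with hlt | hgt
  · obtain ⟨w, rfl⟩ := Nat.exists_eq_add_of_le (by omega : u ≤ v)
    refine ⟨u, w, u + w, by omega, by omega, hv, by simpa using hcop, rfl, by omega, ?_⟩
    congr 2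
    omega
  · obtain ⟨w, rfl⟩ := Nat.exists_eq_add_of_le (by omega : v ≤ u)
    refine ⟨w, v, v + w, by omega, hv, by omega, by simpa using hcop, by omega, by omega, ?_⟩
    rw [show ((v + w : ℕ) - v : ℤ).natAbs = w by omega]
    ring

lemma abcConductor_X_mul_X_sub_one (t : ℚ) :
    abcConductor (X * (X - 1)) t = radical (t.num * (t.num - t.den) * t.den) := by
  have hd : (t.den : ℚ) ≠ 0 := mod_cast t.den_ne_zero
  have hcop : IsCoprime (t.num * (t.num - t.den)) ((t.den : ℤ) * t.den) := by
    have h := Rat.isCoprime_num_den t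
    have h' : IsCoprime (t.num - t.den) t.den := by
      simpa [sub_eq_add_neg] using h.add_mul_left_left (-1)
    exact (h.mul_left h').mul_right (h.mul_left h')
  have heval : eval t (X * (X - 1)) =
      ((t.num * (t.num - t.den) : ℤ) : ℚ) / ((t.den : ℤ) * t.den : ℤ) := by
    simp only [eval_mul, eval_sub, eval_X, eval_one]
    push_cast
    nth_rw 1 2 [← Rat.num_div_den t]
    field_simp
  rw [abcConductor, heval, Rat.num_div_eq_of_coprime (by have := t.den_pos; positivity)
    (Int.isCoprime_iff_nat_coprime.mp hcop)]

lemma le_max_mul_rpow_of_le_mul_rpow {H R K ε : ℝ} (hH : 1 ≤ H) (hR : 1 ≤ R) (hε : 0 ≤ ε)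
    (h : H ≤ K * R ^ (1 + ε)) : H ≤ max K 1 * R * H ^ ε := by
  have hHε : 1 ≤ H ^ ε := Real.one_le_rpow hH hε
  rcases le_total R H with hRH | hHR
  · calc H ≤ K * R ^ (1 + ε) := h
      _ = K * (R * R ^ ε) := by rw [Real.rpow_add (by positivity), Real.rpow_one]
      _ ≤ max K 1 * (R * H ^ ε) := by gcongr; exact le_max_left K 1
      _ = max K 1 * R * H ^ ε := (mul_assoc _ _ _).symm
  · calc H ≤ 1 * R * 1 := by simpa using hHR
      _ ≤ max K 1 * R * H ^ ε := by gcongr; exact le_max_right K 1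

lemma ABCConjecture.abcBound_X_mul_X_sub_one (habc : ABCConjecture) :
    ABCBound (X * (X - 1)) := by
  intro ε hε
  obtain ⟨K, hK, hbound⟩ := habc ε hε
  refine ⟨max K 1, by positivity, fun t ht ↦ ?_⟩
  have hne : t ≠ 0 ∧ t ≠ 1 := by simpa [sub_eq_zero] using ht
  have hnum : t.num ≠ t.den := fun h ↦ hne.2 <| by
    rw [← Rat.num_div_den t, h, Int.cast_natCast, div_self (mod_cast t.den_ne_zero)]
  obtain ⟨a, b, c, ha, hb, hc, hcop, hsum, hle, hprod⟩ :=
    exists_abc_triple t.reduced t.den_pos (Rat.num_ne_zero.mpr hne.1) hnum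
  have hrad : (radNat (a * b * c) : ℝ) = abcConductor (X * (X - 1)) t := by
    rw [abcConductor_X_mul_X_sub_one, radNat_eq_radical, hprod, ← Int.radical_natAbs_eq_radical,
      Int.cast_natCast]
  have hH : mulHeight₁ t ≤ K * (abcConductor (X * (X - 1)) t : ℝ) ^ (1 + ε) := by
    rw [← hrad, Rat.mulHeight₁_eq_max]
    exact (Nat.cast_le.mpr hle).trans (hbound a b c ha hb hc hcop hsum)
  have hdeg : (X * (X - 1) : ℚ[X]).natDegree = 2 := by compute_degree!
  rw [hdeg, sq, Real.rpow_add (mulHeight₁_pos t), Real.rpow_one, ← mul_assoc, mul_right_comm]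
  gcongr
  exact le_max_mul_rpow_of_le_mul_rpow (one_le_mulHeight₁ t) (one_le_abcConductor _ t) hε.le hH

/-! ### Transport along a polynomial map -/

section UniqueFactorizationMonoid

variable {M : Type*} [CommMonoidWithZero M] [UniqueFactorizationMonoid M] {a b : M}

lemma dvd_of_forall_prime_pow_dvd (ha : a ≠ 0)
    (h : ∀ p, Prime p → ∀ e : ℕ, p ^ e ∣ a → p ^ e ∣ b) : a ∣ b := by
  rw [dvd_iff_emultiplicity_le ha]
  exact fun p hp ↦ emultiplicity_le_emultiplicity_iff.mpr (h p hp)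

lemma dvd_of_squarefree_of_forall_prime_dvd (ha : Squarefree a) (ha0 : a ≠ 0)
    (h : ∀ p, Prime p → p ∣ a → p ∣ b) : a ∣ b :=
  dvd_of_forall_prime_pow_dvd ha0 fun p hp e he ↦ by
    rcases e with _ | _ | e
    · simp
    · simpa using h p hp (by simpa using he)
    · refine absurd (ha p (.trans ?_ he)) hp.not_isUnit
      rw [← sq]
      exact pow_dvd_pow p (Nat.le_add_left 2 e)

end UniqueFactorizationMonoid

section CharZero

variable {K : Type*} [Field K] [CharZero K]

lemma pow_succ_dvd_of_pow_dvd_derivative {p f : K[X]} (hp : Prime p) (hpf : p ∣ f) {e : ℕ}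
    (he : p ^ e ∣ derivative f) : p ^ (e + 1) ∣ f := by
  induction e with
  | zero => simpa using hpf
  | succ e ih =>
    obtain ⟨w, rfl⟩ := ih ((pow_dvd_pow p e.le_succ).trans he)
    have hdvd : p ^ e * p ∣ p ^ e * (C ((e : K) + 1) * derivative p * w) := by
      rw [derivative_mul, dvd_add_left (dvd_mul_right _ _), derivative_pow_succ] at he
      convert he using 1 <;> ring
    have hC : ¬ p ∣ C ((e : K) + 1) := fun h ↦
      hp.not_isUnit (isUnit_of_dvd_unit h (isUnit_C.mpr (Nat.cast_add_one_ne_zero e).isUnit))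
    have hp' : ¬ p ∣ derivative p := fun h ↦
      hp.not_isUnit (hp.irreducible.separable.isUnit_of_dvd' dvd_rfl h)
    rw [mul_dvd_mul_iff_left (pow_ne_zero e hp.ne_zero), hp.dvd_mul, hp.dvd_mul] at hdvd
    rw [pow_succ]
    exact mul_dvd_mul_left _ (hdvd.resolve_left (not_or.mpr ⟨hC, hp'⟩))

/-- A zero of `φ'` of multiplicity `e` that is a zero of `g ∘ φ` is a zero of multiplicity
`e + 1`. -/
lemma derivative_dvd_divRadical_comp [DecidableEq K] {g φ : K[X]} (hφ : derivative φ ≠ 0)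
    (hcrit : ∀ p, Prime p → p ∣ derivative φ → p ∣ g.comp φ) :
    derivative φ ∣ divRadical (g.comp φ) := by
  refine dvd_of_forall_prime_pow_dvd hφ fun p hp e he ↦ ?_
  obtain rfl | he0 := eq_or_ne e 0
  · simp
  have hsucc : p ^ (e + 1) ∣ g.comp φ :=
    pow_succ_dvd_of_pow_dvd_derivative hp (hcrit p hp ((dvd_pow_self p he0).trans he)) <| by
      rw [derivative_comp]
      exact he.mul_right _
  rw [← radical_mul_divRadical (a := g.comp φ)] at hsucc
  exact squarefree_radical.pow_dvd_of_squarefree_of_pow_succ_dvd_mul_right hp hsucc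

end CharZero

/-- By the Riemann-Hurwitz count, `g ∘ φ` has at most `deg φ * deg g - (deg φ - 1)` distinct zeros,
because the critical values of `φ` are zeros of `g`. -/
lemma ABCBound.transport {f g φ : ℚ[X]} (hg : ABCBound g) (hg0 : g ≠ 0) (hφ : φ.natDegree ≠ 0)
    (hf : Squarefree f) (hdvd : ∀ p, Prime p → p ∣ f * derivative φ → p ∣ g.comp φ) :
    ABCBound f := by
  have hφ' : derivative φ ≠ 0 := mt derivative_eq_zero.mp hφ
  have hG : g.comp φ ≠ 0 := by
    rw [Ne, comp_eq_zero_iff]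
    rintro (h | ⟨-, h⟩)
    · exact hg0 h
    · exact hφ (h ▸ natDegree_C _)
  have hcard :
      (derivative φ).natDegree + (radical (g.comp φ)).natDegree ≤ (g.comp φ).natDegree := by
    rw [← natDegree_mul hφ' radical_ne_zero]
    refine natDegree_le_of_dvd ?_ hG
    calc derivative φ * radical (g.comp φ) ∣ divRadical (g.comp φ) * radical (g.comp φ) :=
          mul_dvd_mul_right (derivative_dvd_divRadical_comp hφ' fun p hp h ↦
            hdvd p hp (h.mul_left f)) _
      _ = g.comp φ := divRadical_mul_radical
  obtain ⟨k, hk⟩ := exists_dvd_radical_self_pow hG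
  have hbound : ABCBound (radical (g.comp φ)) := by
    refine hg.of_comp radical_ne_zero hφ hk ?_
    rw [natDegree_comp, natDegree_derivative, mul_comm] at hcard
    lia
  refine hbound.of_dvd radical_ne_zero ?_
  refine dvd_of_squarefree_of_forall_prime_dvd hf hf.ne_zero fun p hp h ↦ ?_
  exact (dvd_radical_iff_of_irreducible hp.irreducible hG).mpr (hdvd p hp (h.mul_right _))

/-! ### Rational points -/

lemma squarefree_prod_X_sub_C {K : Type*} [Field K] (S : Finset K) :
    Squarefree (∏ x ∈ S, (X - C x)) :=
  (separable_prod_X_sub_C_iff'.mpr fun _ _ _ _ h ↦ h).squarefree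

lemma X_sub_C_dvd_prod_X_sub_C_comp {R : Type*} [CommRing R] {T : Finset R} {φ : R[X]} {x : R}
    (hx : φ.eval x ∈ T) : X - C x ∣ (∏ y ∈ T, (X - C y)).comp φ := by
  rw [dvd_iff_isRoot, IsRoot.def, eval_comp, eval_prod]
  exact Finset.prod_eq_zero hx (by simp)

lemma ABCBound.transport_prod_X_sub_C {S T : Finset ℚ} {φ : ℚ[X]}
    (hT : ABCBound (∏ y ∈ T, (X - C y))) (hφ : φ.natDegree ≠ 0) (hmaps : ∀ x ∈ S, φ.eval x ∈ T)
    (hcrit : ∀ p, Prime p → p ∣ derivative φ → ∃ x ∈ S, p ∣ X - C x) :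
    ABCBound (∏ x ∈ S, (X - C x)) := by
  refine hT.transport (squarefree_prod_X_sub_C T).ne_zero hφ (squarefree_prod_X_sub_C S)
    fun p hp h ↦ ?_
  obtain ⟨x, hx, hpx⟩ : ∃ x ∈ S, p ∣ X - C x :=
    (hp.dvd_or_dvd h).elim hp.exists_mem_finset_dvd (hcrit p hp)
  exact hpx.trans (X_sub_C_dvd_prod_X_sub_C_comp (hmaps x hx))

lemma ABCConjecture.abcBound_prod_X_sub_C_pair (habc : ABCConjecture) {a c : ℚ} (hac : a ≠ c) :
    ABCBound (∏ x ∈ {a, c}, (X - C x)) := by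
  have hca : c - a ≠ 0 := sub_ne_zero.mpr hac.symm
  have hT : ABCBound (∏ y ∈ {0, 1}, (X - C y)) := by
    simpa using habc.abcBound_X_mul_X_sub_one
  refine hT.transport_prod_X_sub_C (φ := C (c - a)⁻¹ * (X - C a)) ?_ ?_ fun p hp h ↦ ?_
  · simp [natDegree_C_mul (inv_ne_zero hca)]
  · simp [hca]
  · have hunit : IsUnit (derivative (C (c - a)⁻¹ * (X - C a))) := by simpa using hca
    exact absurd (isUnit_of_dvd_unit h hunit) hp.not_isUnit

lemma exists_succ_mul_eq_succ_mul {x y : ℚ} (hx : 0 < x) (hy : 0 < y) :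
    ∃ m n : ℕ, (m + 1) * x = (n + 1) * y := by
  obtain ⟨m, hm⟩ : ∃ m : ℕ, (y / x).num = m + 1 :=
    ⟨(y / x).num.toNat - 1, by have := Rat.num_pos.mpr (div_pos hy hx); omega⟩
  obtain ⟨n, hn⟩ : ∃ n : ℕ, (y / x).den = n + 1 := Nat.exists_eq_succ_of_ne_zero (y / x).den_ne_zero
  refine ⟨m, n, ?_⟩
  have h := Rat.mul_den_eq_num (y / x)
  rw [hm, hn, div_mul_eq_mul_div, div_eq_iff hx.ne'] at h
  push_cast at h
  linarith

lemma derivative_X_sub_C_pow_mul_X_sub_C_pow {R : Type*} [CommRing R] {a b c : R} {m n : ℕ}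
    (h : (m + 1) * (c - b) = (n + 1) * (b - a)) :
    derivative ((X - C a) ^ (m + 1) * (X - C c) ^ (n + 1)) =
      C (m + n + 2 : R) * ((X - C a) ^ m * (X - C c) ^ n * (X - C b)) := by
  have hC := congrArg C h
  simp only [derivative_mul, derivative_X_sub_C_pow, C_mul, C_sub, C_add, C_1, map_natCast,
    map_ofNat, Nat.cast_add_one, Nat.add_sub_cancel] at hC ⊢
  linear_combination (-(X - C a) ^ m * (X - C c) ^ n) * hC

lemma exists_lt_lt_of_two_lt_card {α : Type*} [LinearOrder α] {S : Finset α} (hS : 2 < S.card) :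
    ∃ a ∈ S, ∃ b ∈ S, ∃ c ∈ S, a < b ∧ b < c := by
  refine ⟨_, S.orderEmbOfFin_mem rfl ⟨0, by omega⟩, _, S.orderEmbOfFin_mem rfl ⟨1, by omega⟩, _,
    S.orderEmbOfFin_mem rfl ⟨2, hS⟩, ?_, ?_⟩ <;> simp

/-- Belyi's map `(x - a) ^ m * (x - c) ^ n`, where `a < b < c` are in `S` and
`m / n = (b - a) / (c - b)`, is critical only at `a, b, c`, and identifies `a` with `c`. -/
lemma exists_card_image_eval_lt {S : Finset ℚ} (hS : 2 < S.card) :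
    ∃ φ : ℚ[X], φ.natDegree ≠ 0 ∧ (S.image (eval · φ)).card < S.card ∧
      ∀ p, Prime p → p ∣ derivative φ → ∃ x ∈ S, p ∣ X - C x := by
  obtain ⟨a, ha, b, hb, c, hc, hab, hbc⟩ := exists_lt_lt_of_two_lt_card hS
  obtain ⟨m, n, hmn⟩ := exists_succ_mul_eq_succ_mul (sub_pos.mpr hbc) (sub_pos.mpr hab)
  refine ⟨(X - C a) ^ (m + 1) * (X - C c) ^ (n + 1), ?_, ?_, fun p hp h ↦ ?_⟩
  · simp [natDegree_mul, X_sub_C_ne_zero]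
  · refine lt_of_le_of_ne Finset.card_image_le fun heq ↦ ?_
    exact (hab.trans hbc).ne (Finset.card_image_iff.mp heq ha hc (by simp))
  · have hunit : IsUnit (C (m + n + 2 : ℚ)) := isUnit_C.mpr (by positivity : _ ≠ _).isUnit
    rw [derivative_X_sub_C_pow_mul_X_sub_C_pow hmn, hunit.dvd_mul_left] at h
    rcases hp.dvd_or_dvd h with h | h
    · rcases hp.dvd_or_dvd h with h | h
      · exact ⟨a, ha, hp.dvd_of_dvd_pow h⟩
      · exact ⟨c, hc, hp.dvd_of_dvd_pow h⟩
    · exact ⟨b, hb, h⟩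

lemma ABCConjecture.abcBound_prod_X_sub_C (habc : ABCConjecture) (S : Finset ℚ) :
    ABCBound (∏ x ∈ S, (X - C x)) := by
  induction hk : S.card using Nat.strong_induction_on generalizing S with
  | _ k ih =>
    subst hk
    obtain hS | hS | hS : S.card ≤ 1 ∨ S.card = 2 ∨ 2 < S.card := by omega
    · exact .of_natDegree_le_one (by simpa using hS)
    · obtain ⟨a, c, hac, rfl⟩ := Finset.card_eq_two.mp hS
      exact habc.abcBound_prod_X_sub_C_pair hac
    · obtain ⟨φ, hφ, hcard, hcrit⟩ := exists_card_image_eval_lt hS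
      exact (ih _ hcard _ rfl).transport_prod_X_sub_C hφ
        (fun x hx ↦ Finset.mem_image_of_mem _ hx) hcrit

/-! ### Algebraic points -/

lemma exists_mem_primeFactors_dvd {M : Type*} [CommMonoidWithZero M] [NormalizationMonoid M]
    [UniqueFactorizationMonoid M] {a p : M} (ha : a ≠ 0) (hp : Prime p) (h : p ∣ a) :
    ∃ q ∈ primeFactors a, p ∣ q := by
  obtain ⟨q, hq, hpq⟩ := exists_mem_normalizedFactors_of_dvd ha hp.irreducible h
  exact ⟨q, mem_primeFactors.mpr hq, hpq.dvd⟩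

section Pushforward

variable {K : Type*} [Field K]

/-- If `q` is the minimal polynomial of `β`, then `pushforward φ q` is the minimal polynomial
of `φ β`. -/
noncomputable def pushforward (φ q : K[X]) : K[X] := minpoly K (AdjoinRoot.mk q φ)

variable {φ q : K[X]}

lemma isIntegral_adjoinRoot_mk (hq : q ≠ 0) : IsIntegral K (AdjoinRoot.mk q φ) :=
  have := (AdjoinRoot.powerBasis hq).finite
  .of_finite K _

lemma pushforward_monic (hq : q ≠ 0) : (pushforward φ q).Monic :=
  minpoly.monic (isIntegral_adjoinRoot_mk hq)

lemma pushforward_irreducible (hq : Irreducible q) : Irreducible (pushforward φ q) :=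
  have : Fact (Irreducible q) := ⟨hq⟩
  minpoly.irreducible (isIntegral_adjoinRoot_mk hq.ne_zero)

lemma natDegree_pushforward_le (hq : q ≠ 0) : (pushforward φ q).natDegree ≤ q.natDegree := by
  have := (AdjoinRoot.powerBasis hq).finite
  calc (pushforward φ q).natDegree ≤ Module.finrank K (AdjoinRoot q) := minpoly.natDegree_le _
    _ = q.natDegree := by rw [(AdjoinRoot.powerBasis hq).finrank, AdjoinRoot.powerBasis_dim]

lemma dvd_pushforward_comp : q ∣ (pushforward φ q).comp φ := by
  rw [← AdjoinRoot.mk_eq_zero, ← AdjoinRoot.aeval_eq, aeval_comp, AdjoinRoot.aeval_eq]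
  exact minpoly.aeval K _

lemma pushforward_self (hq : Irreducible q) : pushforward q q = X := by
  have : Fact (Irreducible q) := ⟨hq⟩
  rw [pushforward, AdjoinRoot.mk_self, minpoly.zero]

variable [DecidableEq K] {S : Finset K[X]}

lemma dvd_prod_image_pushforward_comp (hq : q ∈ S) :
    q ∣ (∏ m ∈ S.image (pushforward φ), m).comp φ := by
  rw [prod_comp]
  exact dvd_pushforward_comp.trans
    (Finset.dvd_prod_of_mem (comp · φ) (Finset.mem_image_of_mem _ hq))

lemma monic_and_irreducible_of_mem_image_pushforward (hS : ∀ q ∈ S, Irreducible q) {m : K[X]}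
    (hm : m ∈ S.image (pushforward φ)) : m.Monic ∧ Irreducible m := by
  obtain ⟨q, hq, rfl⟩ := Finset.mem_image.mp hm
  exact ⟨pushforward_monic (hS q hq).ne_zero, pushforward_irreducible (hS q hq)⟩

end Pushforward

section Excess

variable {K : Type*} [Field K]

lemma squarefree_prod_of_monic_irreducible {S : Finset K[X]}
    (hS : ∀ p ∈ S, p.Monic ∧ Irreducible p) : Squarefree (∏ p ∈ S, p) := by
  refine Finset.squarefree_prod_of_pairwise_isCoprime (fun p hp q hq hpq ↦ ?_)
    fun p hp ↦ (hS p hp).2.squarefree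
  refine (hS p hp).2.isRelPrime_iff_not_dvd.mpr fun h ↦ hpq ?_
  exact eq_of_monic_of_associated (hS p hp).1 (hS q hq).1
    ((hS p hp).2.associated_of_dvd (hS q hq).2 h)

/-- A measure of how far the zeros of the irreducible polynomials in `S` are from being rational:
it vanishes if and only if all of them are. -/
def excess (S : Finset K[X]) : ℕ := ∑ p ∈ S, (p.natDegree - 1)

lemma excess_union_le [DecidableEq K[X]] (S T : Finset K[X]) :
    excess (S ∪ T) ≤ excess S + excess T := by
  rw [excess, excess, excess, ← Finset.sum_union_inter]
  exact Nat.le_add_right _ _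

variable [DecidableEq K]

lemma monic_and_irreducible_of_mem_primeFactors {f p : K[X]} (hp : p ∈ primeFactors f) :
    p.Monic ∧ Irreducible p := by
  rw [mem_primeFactors] at hp
  have hirr := irreducible_of_normalized_factor p hp
  exact ⟨normalize_normalized_factor p hp ▸ monic_normalize hirr.ne_zero, hirr⟩

lemma excess_primeFactors_le {f : K[X]} (hf : f ≠ 0) :
    excess (primeFactors f) ≤ f.natDegree - 1 := by
  have hirr : ∀ p ∈ primeFactors f, Irreducible p := fun p hp ↦
    (monic_and_irreducible_of_mem_primeFactors hp).2
  have hsum : ∑ p ∈ primeFactors f, p.natDegree ≤ f.natDegree := by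
    rw [← natDegree_prod _ _ fun p hp ↦ (hirr p hp).ne_zero]
    exact natDegree_le_of_dvd radical_dvd_self hf
  rcases (primeFactors f).eq_empty_or_nonempty with hemp | hne
  · simp [excess, hemp]
  · refine (Nat.le_sub_one_of_lt ?_).trans (Nat.sub_le_sub_right hsum 1)
    exact Finset.sum_lt_sum_of_nonempty hne fun p hp ↦ Nat.sub_one_lt (hirr p hp).natDegree_pos.ne'

lemma excess_image_pushforward_le {S : Finset K[X]} (hS : ∀ q ∈ S, Irreducible q) (φ : K[X]) :
    excess (S.image (pushforward φ)) ≤ excess S :=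
  Finset.sum_image_le_of_nonneg (fun _ _ ↦ Nat.zero_le _) |>.trans <|
    Finset.sum_le_sum fun q hq ↦
      Nat.sub_le_sub_right (natDegree_pushforward_le (hS q hq).ne_zero) 1

/-- The map `p` sends its own zeros to `0`, which saves `deg p - 1`, while its critical points
contribute at most `deg p - 2`. -/
lemma excess_image_pushforward_self_lt [CharZero K] {S : Finset K[X]}
    (hS : ∀ q ∈ S, Irreducible q) {p : K[X]} (hp : p ∈ S) (hdeg : 1 < p.natDegree) :
    excess ((S ∪ primeFactors (derivative p)).image (pushforward p)) < excess S := by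
  set D := primeFactors (derivative p)
  have hsplit : (S ∪ D).image (pushforward p) = {X} ∪ (S.erase p ∪ D).image (pushforward p) := by
    conv_lhs => rw [← Finset.insert_erase hp]
    simp [pushforward_self (hS p hp)]
  have hirr : ∀ q ∈ S.erase p ∪ D, Irreducible q := fun q hq ↦
    (Finset.mem_union.mp hq).elim (fun h ↦ hS q (Finset.mem_of_mem_erase h))
      fun h ↦ (monic_and_irreducible_of_mem_primeFactors h).2
  have hD : excess D ≤ p.natDegree - 1 - 1 := by
    rw [← natDegree_derivative p]
    exact excess_primeFactors_le (mt derivative_eq_zero.mp (by omega))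
  calc excess ((S ∪ D).image (pushforward p))
      ≤ excess {X} + excess ((S.erase p ∪ D).image (pushforward p)) := hsplit ▸ excess_union_le _ _
    _ ≤ 0 + (excess (S.erase p) + (p.natDegree - 1 - 1)) := by
        gcongr
        · simp [excess]
        · exact (excess_image_pushforward_le hirr p).trans ((excess_union_le _ _).trans (by gcongr))
    _ < p.natDegree - 1 + excess (S.erase p) := by omega
    _ = excess S := Finset.add_sum_erase S (fun q ↦ q.natDegree - 1) hp

end Excess

lemma ABCConjecture.abcBound_prod_of_natDegree_eq_one (habc : ABCConjecture) {S : Finset ℚ[X]}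
    (hS : ∀ p ∈ S, p.Monic ∧ Irreducible p) (hdeg : ∀ p ∈ S, p.natDegree = 1) :
    ABCBound (∏ p ∈ S, p) := by
  set T := S.image fun p ↦ -p.coeff 0
  refine (habc.abcBound_prod_X_sub_C T).of_dvd (squarefree_prod_X_sub_C T).ne_zero ?_
  have hsq := squarefree_prod_of_monic_irreducible hS
  refine dvd_of_squarefree_of_forall_prime_dvd hsq hsq.ne_zero fun q hq hqS ↦ ?_
  obtain ⟨p, hp, hqp⟩ := hq.exists_mem_finset_dvd hqS
  have hpX : p = X - C (-p.coeff 0) := by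
    rw [C_neg, sub_neg_eq_add]
    exact (hS p hp).1.eq_X_add_C (hdeg p hp)
  rw [hpX] at hqp
  exact hqp.trans (Finset.dvd_prod_of_mem (fun x ↦ X - C x) (Finset.mem_image_of_mem _ hp))

lemma ABCConjecture.abcBound_prod_of_monic_irreducible (habc : ABCConjecture) (S : Finset ℚ[X])
    (hS : ∀ p ∈ S, p.Monic ∧ Irreducible p) : ABCBound (∏ p ∈ S, p) := by
  induction hk : excess S using Nat.strong_induction_on generalizing S with
  | _ k ih =>
    subst hk
    by_cases hlin : ∀ p ∈ S, p.natDegree = 1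
    · exact habc.abcBound_prod_of_natDegree_eq_one hS hlin
    push Not at hlin
    obtain ⟨p, hp, hp1⟩ := hlin
    have hpdeg : p.natDegree ≠ 0 := (hS p hp).2.natDegree_pos.ne'
    set D := primeFactors (derivative p)
    have hirr : ∀ q ∈ S ∪ D, Irreducible q := fun q hq ↦ (Finset.mem_union.mp hq).elim
      (fun h ↦ (hS q h).2) fun h ↦ (monic_and_irreducible_of_mem_primeFactors h).2
    set T := (S ∪ D).image (pushforward p)
    have hT : ∀ m ∈ T, m.Monic ∧ Irreducible m := fun _ ↦
      monic_and_irreducible_of_mem_image_pushforward hirr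
    have hbound : ABCBound (∏ m ∈ T, m) :=
      ih _ (excess_image_pushforward_self_lt (fun q hq ↦ (hS q hq).2) hp (by omega)) T hT rfl
    refine hbound.transport (squarefree_prod_of_monic_irreducible hT).ne_zero hpdeg
      (squarefree_prod_of_monic_irreducible hS) fun q hq h ↦ ?_
    obtain ⟨q', hq', hqq'⟩ : ∃ q' ∈ S ∪ D, q ∣ q' := by
      rcases hq.dvd_or_dvd h with h | h
      · obtain ⟨q', hq', hqq'⟩ := hq.exists_mem_finset_dvd h
        exact ⟨q', Finset.mem_union_left _ hq', hqq'⟩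
      · obtain ⟨q', hq', hqq'⟩ := exists_mem_primeFactors_dvd (mt derivative_eq_zero.mp hpdeg) hq h
        exact ⟨q', Finset.mem_union_right _ hq', hqq'⟩
    exact hqq'.trans (dvd_prod_image_pushforward_comp hq')

lemma ABCConjecture.abcBound_of_squarefree (habc : ABCConjecture) {f : ℚ[X]}
    (hf : Squarefree f) : ABCBound f :=
  (habc.abcBound_prod_of_monic_irreducible (primeFactors f)
    fun _ ↦ monic_and_irreducible_of_mem_primeFactors).of_dvd radical_ne_zero
    (hf.isRadical.dvd_radical hf.ne_zero)

/-! ### Dehomogenization -/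

section GaussLemma

variable {R : Type*} [CommRing R] [IsDomain R] [NormalizedGCDMonoid R]
  (K : Type*) [Field K] [Algebra R K] [IsFractionRing R K]

lemma exists_isPrimitive_associated_map {q : K[X]} (hq : q ≠ 0) :
    ∃ p : R[X], p.IsPrimitive ∧ Associated (p.map (algebraMap R K)) q := by
  set n := IsLocalization.integerNormalization (nonZeroDivisors R) q
  obtain ⟨b, hb, hbq⟩ := IsLocalization.integerNormalization_spec (nonZeroDivisors R) q
  have hb0 : algebraMap R K b ≠ 0 :=
    IsFractionRing.to_map_ne_zero_of_mem_nonZeroDivisors hb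
  replace hbq : n.map (algebraMap R K) = C (algebraMap R K b) * q := by
    rw [hbq, algebra_compatible_smul K, smul_eq_C_mul]
  have hn : n ≠ 0 := by
    intro hn
    rw [hn, Polynomial.map_zero] at hbq
    exact mul_ne_zero (C_ne_zero.mpr hb0) hq hbq.symm
  have hc : algebraMap R K n.content ≠ 0 :=
    (map_ne_zero_iff _ (IsFractionRing.injective R K)).mpr (mt content_eq_zero_iff.mp hn)
  refine ⟨n.primPart, n.isPrimitive_primPart, ?_⟩
  rw [n.eq_C_content_mul_primPart, Polynomial.map_mul, map_C] at hbq
  exact (associated_isUnit_mul_left_iff (isUnit_C.mpr hc.isUnit)).mp <|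
    hbq ▸ associated_unit_mul_left _ _ (isUnit_C.mpr hb0.isUnit)

lemma squarefree_map_of_forall_natDegree_eq_zero {f : R[X]} (hf : f ≠ 0)
    (h : ∀ g : R[X], g * g ∣ f → g.natDegree = 0) : Squarefree (f.map (algebraMap R K)) := by
  have hinj : Function.Injective (algebraMap R K) := IsFractionRing.injective R K
  intro q hqf
  have hq : q ≠ 0 := by
    rintro rfl
    rw [zero_mul, zero_dvd_iff, Polynomial.map_eq_zero_iff hinj] at hqf
    exact hf hqf
  obtain ⟨p, hp, hpq⟩ := exists_isPrimitive_associated_map (R := R) K hq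
  have hpf : p * p ∣ f := by
    rw [(hp.mul hp).dvd_iff_fraction_map_dvd_fraction_map K, Polynomial.map_mul]
    exact (hpq.mul_mul hpq).dvd.trans hqf
  rw [← hpq.isUnit_iff, isUnit_iff_degree_eq_zero, degree_map_eq_of_injective hinj,
    degree_eq_natDegree hp.ne_zero, h p hpf, Nat.cast_zero]

end GaussLemma

section Homogenize

variable {R : Type*} [CommSemiring R] {f : R[X]} {n : ℕ}

lemma X_pow_mul_homogenize (k : ℕ) (hn : f.natDegree ≤ n) :
    MvPolynomial.X 1 ^ k * f.homogenize n = f.homogenize (k + n) := by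
  rw [← homogenize_one, ← homogenize_mul _ _ (by simp) hn, one_mul]

lemma le_natDegree_add_one_of_squarefree_homogenize [Nontrivial R]
    (hsq : Squarefree (f.homogenize n)) : n ≤ f.natDegree + 1 := by
  by_contra! hlt
  have hdvd : MvPolynomial.X 1 * MvPolynomial.X 1 ∣ f.homogenize n := by
    rw [← pow_two, ← Nat.add_sub_cancel' (show 2 ≤ n by omega),
      ← X_pow_mul_homogenize 2 (show f.natDegree ≤ n - 2 by omega)]
    exact dvd_mul_right _ _
  have hunit := (hsq _ hdvd).map (MvPolynomial.eval (0 : Fin 2 → R))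
  simp only [MvPolynomial.eval_X, Pi.zero_apply, isUnit_zero_iff, zero_ne_one] at hunit

lemma natDegree_eq_zero_of_squarefree_homogenize [Nontrivial R] [NoZeroDivisors R] {g : R[X]}
    (hn : f.natDegree ≤ n) (hsq : Squarefree (f.homogenize n)) (hg : g * g ∣ f) :
    g.natDegree = 0 := by
  have hg0 : g ≠ 0 := by
    rintro rfl
    rw [zero_mul, zero_dvd_iff] at hg
    exact hsq.ne_zero (by rw [hg, homogenize_zero])
  have hdvd : g.homogenize g.natDegree * g.homogenize g.natDegree ∣ f.homogenize n := by
    rw [← homogenize_mul _ _ le_rfl le_rfl, ← natDegree_mul hg0 hg0, ← Nat.sub_add_cancel hn,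
      ← X_pow_mul_homogenize _ le_rfl]
    exact (homogenize_dvd hg).mul_left _
  have hunit := (hsq _ hdvd).map (MvPolynomial.aeval ![(X : R[X]), 1])
  rw [aeval_homogenize_X_one _ le_rfl] at hunit
  exact natDegree_eq_zero_of_isUnit hunit

end Homogenize

lemma squarefree_map_of_squarefree_homogenize {R : Type*} [CommRing R] [IsDomain R]
    [NormalizedGCDMonoid R] (K : Type*) [Field K] [Algebra R K] [IsFractionRing R K] {f : R[X]}
    {n : ℕ} (hn : f.natDegree ≤ n) (hsq : Squarefree (f.homogenize n)) :
    Squarefree (f.map (algebraMap R K)) := by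
  refine squarefree_map_of_forall_natDegree_eq_zero K ?_ fun g ↦
    natDegree_eq_zero_of_squarefree_homogenize hn hsq
  rintro rfl
  exact hsq.ne_zero (homogenize_zero n)

/-! ### Values of binary forms -/

lemma mulHeight₁_div_eq_max_abs {u v : ℤ} (huv : IsCoprime u v) :
    mulHeight₁ ((u : ℚ) / v) = (max |u| |v| : ℤ) := by
  have hgcd : Finset.univ.gcd ![u, v] = 1 := by
    simpa [Finset.univ_fin2, ← Int.coe_gcd, ← Int.abs_eq_normalize, Int.gcd, Int.natAbs_abs]
      using Int.isCoprime_iff_gcd_eq_one.mp huv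
  have hcast : ![(u : ℚ), v] = (↑) ∘ ![u, v] := by
    ext i
    fin_cases i <;> rfl
  have hsup : ⨆ i, |![u, v] i| = max |u| |v| := by
    rw [← sSup_range, show Set.range (fun i ↦ |![u, v] i|) = {|u|, |v|} by
      ext; simp [eq_comm], csSup_pair]
  rw [mulHeight₁_div_eq_mulHeight, hcast, Rat.mulHeight_eq_max_abs_of_gcd_eq_one hgcd, hsup]

lemma cast_eval_homogenize {f : ℤ[X]} {n : ℕ} (hn : f.natDegree ≤ n) (u : ℤ) {v : ℤ}
    (hv : v ≠ 0) : ((MvPolynomial.eval ![u, v] (f.homogenize n) : ℤ) : ℚ) =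
      (f.map (algebraMap ℤ ℚ)).eval ((u : ℚ) / v) * (v : ℚ) ^ n := by
  have h := eval_homogenize (natDegree_map_le.trans hn : (f.map (algebraMap ℤ ℚ)).natDegree ≤ n)
    ![(u : ℚ), v] (Int.cast_ne_zero.mpr hv)
  have hcast : ![(u : ℚ), v] = algebraMap ℤ ℚ ∘ ![u, v] := by
    ext i
    fin_cases i <;> rfl
  rw [homogenize_map, hcast, MvPolynomial.eval_map, ← MvPolynomial.eval₂_comp] at h
  simpa using h

lemma num_eval_div_dvd_eval_homogenize {f : ℤ[X]} {n : ℕ} (hn : f.natDegree ≤ n) (u : ℤ) {v : ℤ}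
    (hv : v ≠ 0) : ((f.map (algebraMap ℤ ℚ)).eval ((u : ℚ) / v)).num ∣
      MvPolynomial.eval ![u, v] (f.homogenize n) := by
  have h := num_dvd_num_mul_mul_den ((f.map (algebraMap ℤ ℚ)).eval ((u : ℚ) / v)) ((v : ℚ) ^ n)
  rwa [← cast_eval_homogenize hn u hv, Rat.num_intCast, ← Int.cast_pow, Rat.den_intCast,
    Nat.cast_one, mul_one] at h

/-- Either `n = deg f`, and the point at infinity is not a zero of the form, which costs a factor
`|v|`; or `n = deg f + 1`, and the primes dividing `v` also divide the value of the form. -/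
lemma abcConductor_mul_pow_le {f : ℤ[X]} {n : ℕ} (hn : f.natDegree ≤ n)
    (hn' : n ≤ f.natDegree + 1) {u v : ℤ} (hv : v ≠ 0)
    (hs : MvPolynomial.eval ![u, v] (f.homogenize n) ≠ 0) :
    abcConductor (f.map (algebraMap ℤ ℚ)) (u / v) * max |u| |v| ^ n ≤
      max |u| |v| ^ (f.natDegree + 1) *
        radical (MvPolynomial.eval ![u, v] (f.homogenize n)) := by
  set s := MvPolynomial.eval ![u, v] (f.homogenize n) with hs_def
  have hnum := num_eval_div_dvd_eval_homogenize hn u hv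
  have hden : (((u : ℚ) / v).den : ℤ) ∣ v := by
    simpa only [Rat.divInt_eq_div] using Rat.den_dvd u v
  have hR : 0 < radical s := Int.radical_pos _
  obtain rfl | hlt := hn.eq_or_lt
  · have hdvd : abcConductor (f.map (algebraMap ℤ ℚ)) (u / v) ∣ v * radical s := by
      refine radical_dvd_mul_radical_of_dvd_mul_pow (k := 1) (mul_ne_zero hv hs) ?_
      rw [pow_one, mul_comm]
      exact mul_dvd_mul hden hnum
    have hle : abcConductor (f.map (algebraMap ℤ ℚ)) (u / v) ≤ max |u| |v| * radical s := by
      refine (Int.le_of_dvd (mul_pos (abs_pos.mpr hv) hR) ?_).trans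
        (mul_le_mul_of_nonneg_right (le_max_right |u| |v|) hR.le)
      exact hdvd.trans (mul_dvd_mul_right (self_dvd_abs v) _)
    rw [pow_succ, mul_comm, mul_assoc]
    gcongr
  · obtain rfl : n = f.natDegree + 1 := by omega
    have hvs : v ∣ s := by
      rw [hs_def, add_comm, ← X_pow_mul_homogenize 1 le_rfl]
      simp
    have hdvd : abcConductor (f.map (algebraMap ℤ ℚ)) (u / v) ∣ 1 * radical s := by
      refine radical_dvd_mul_radical_of_dvd_mul_pow (k := 2) ?_ ?_
      · rwa [one_mul]
      rw [one_mul, pow_two]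
      exact mul_dvd_mul hnum (hden.trans hvs)
    rw [one_mul] at hdvd
    rw [mul_comm]
    gcongr
    exact Int.le_of_dvd hR hdvd

lemma ABCConjecture.exists_max_abs_pow_le_of_ne_zero (habc : ABCConjecture) {f : ℤ[X]} {n : ℕ}
    (hn : f.natDegree ≤ n) (hsq : Squarefree (f.homogenize n)) {ε : ℝ} (hε : 0 < ε) :
    ∃ c : ℝ, 0 < c ∧ ∀ u v : ℤ, IsCoprime u v → v ≠ 0 →
      MvPolynomial.eval ![u, v] (f.homogenize n) ≠ 0 →
      ((max |u| |v| : ℤ) : ℝ) ^ n ≤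
        c * (radical (MvPolynomial.eval ![u, v] (f.homogenize n)) : ℤ) *
          ((max |u| |v| : ℤ) : ℝ) ^ (2 + ε) := by
  obtain ⟨c, hc, hbound⟩ :=
    habc.abcBound_of_squarefree (squarefree_map_of_squarefree_homogenize ℚ hn hsq) ε hε
  rw [natDegree_map_eq_of_injective Int.cast_injective] at hbound
  refine ⟨c, hc, fun u v huv hv hs ↦ ?_⟩
  have hy : (f.map (algebraMap ℤ ℚ)).eval ((u : ℚ) / v) ≠ 0 := by
    intro hy
    have hcast := cast_eval_homogenize hn u hv
    rw [hy, zero_mul, Int.cast_eq_zero] at hcast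
    exact hs hcast
  have hheight := hbound _ hy
  rw [mulHeight₁_div_eq_max_abs huv] at hheight
  have hcond :=
    abcConductor_mul_pow_le hn (le_natDegree_add_one_of_squarefree_homogenize hsq) hv hs
  have hN := abcConductor_pos (f.map (algebraMap ℤ ℚ)) (u / v)
  have hH : 0 < max |u| |v| := (abs_pos.mpr hv).trans_le (le_max_right _ _)
  have hR : 0 < radical (MvPolynomial.eval ![u, v] (f.homogenize n)) := Int.radical_pos _
  generalize radical (MvPolynomial.eval ![u, v] (f.homogenize n)) = R at *
  generalize abcConductor (f.map (algebraMap ℤ ℚ)) (u / v) = N at *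
  generalize max |u| |v| = H at *
  rify at hcond hN hH hR
  refine le_of_mul_le_mul_left ?_ hN
  calc (N : ℝ) * H ^ n ≤ H ^ (f.natDegree + 1) * R := hcond
    _ = H ^ f.natDegree * (H * R) := by rw [pow_succ, mul_assoc]
    _ ≤ c * N * H ^ (1 + ε) * (H * R) := by gcongr
    _ = N * (c * R * H ^ (2 + ε)) := by
      rw [show (2 : ℝ) + ε = 1 + ε + 1 by ring, Real.rpow_add_one hH.ne']
      ring

lemma ABCConjecture.exists_max_abs_pow_le (habc : ABCConjecture) {F : MvPolynomial (Fin 2) ℤ}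
    {r : ℕ} (hhom : F.IsHomogeneous r) (hsq : Squarefree F) {ε : ℝ} (hε : 0 < ε) :
    ∃ c : ℝ, 0 < c ∧ ∀ u v : ℤ, IsCoprime u v → MvPolynomial.eval ![u, v] F ≠ 0 →
      ((max |u| |v| : ℤ) : ℝ) ^ r ≤
        c * (radical (MvPolynomial.eval ![u, v] F) : ℤ) * ((max |u| |v| : ℤ) : ℝ) ^ (2 + ε) := by
  set f := MvPolynomial.aeval ![(X : ℤ[X]), 1] F
  have hfr : f.natDegree ≤ r := by
    refine (MvPolynomial.aeval_natDegree_le F hhom.totalDegree_le _ ?_).trans_eq (mul_one r)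
    simp [Fin.forall_fin_two]
  have hfF : f.homogenize r = F := homogenize_eq_of_isHomogeneous hhom rfl
  obtain ⟨c, hc, hbound⟩ := habc.exists_max_abs_pow_le_of_ne_zero hfr (hfF ▸ hsq) hε
  rw [hfF] at hbound
  refine ⟨max c 1, by positivity, fun u v huv hs ↦ ?_⟩
  have hR : (1 : ℝ) ≤ (radical (MvPolynomial.eval ![u, v] F) : ℤ) :=
    mod_cast Int.radical_pos _
  obtain rfl | hv := eq_or_ne v 0
  · have hu : |u| = 1 := Int.isUnit_iff_abs_eq.mp (isCoprime_zero_right.mp huv)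
    have hmax : max |u| |0| = 1 := by simp [hu]
    rw [hmax, Int.cast_one, one_pow, Real.one_rpow, mul_one]
    exact one_le_mul_of_one_le_of_one_le (le_max_right c 1) hR
  · refine (hbound u v huv hv hs).trans ?_
    gcongr
    exact le_max_left c 1

lemma abs_eval_le_of_isHomogeneous {R : Type*} [CommRing R] [LinearOrder R] [IsStrictOrderedRing R]
    {F : MvPolynomial (Fin 2) R} {r : ℕ} (hhom : F.IsHomogeneous r) (u v : R) :
    |MvPolynomial.eval ![u, v] F| ≤ (∑ d ∈ F.support, |F.coeff d|) * max |u| |v| ^ r := by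
  rw [MvPolynomial.eval_eq', Finset.sum_mul]
  refine (Finset.abs_sum_le_sum_abs _ _).trans (Finset.sum_le_sum fun d hd ↦ ?_)
  have hdeg : r = d 0 + d 1 := by
    rw [hhom.degree_eq_sum_deg_support hd, ← Finsupp.degree_apply, Finsupp.degree_eq_sum,
      Fin.sum_univ_two]
  rw [abs_mul, hdeg, pow_add, Fin.prod_univ_two, abs_mul, abs_pow, abs_pow]
  simp only [Matrix.cons_val_zero, Matrix.cons_val_one]
  gcongr
  exacts [le_max_left _ _, le_max_right _ _]

/-- Each prime whose `q`-th power divides `n` occurs at most once in `radical n`, which leaves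
`q - 1` further factors in `n`. -/
lemma prod_pow_mul_radical_le {n q : ℕ} (hn : n ≠ 0) (hq : q ≠ 0) :
    (∏ p ∈ n.primeFactors with p ^ q ∣ n, p) ^ (q - 1) * radical n ≤ n := by
  rw [Finset.prod_filter, ← Finset.prod_pow, Nat.radical_eq_prod_primeFactors,
    ← Finset.prod_mul_distrib]
  conv_rhs => rw [← Nat.prod_factorization_pow_eq_self hn]
  rw [Finsupp.prod, Nat.support_factorization]
  refine Finset.prod_le_prod' fun p hp ↦ ?_
  have hprime := Nat.prime_of_mem_primeFactors hp
  split_ifs with hdvd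
  · rw [← pow_succ, Nat.sub_one_add_one hq]
    exact Nat.pow_le_pow_right hprime.pos ((hprime.pow_dvd_iff_le_factorization hn).mp hdvd)
  · rw [one_pow, one_mul]
    exact Nat.le_self_pow
      (hprime.factorization_pos_of_dvd hn (Nat.dvd_of_mem_primeFactors hp)).ne' p

lemma prod_pow_mul_radical_le_abs {s : ℤ} {q : ℕ} (hs : s ≠ 0) (hq : q ≠ 0) :
    ((∏ p ∈ s.natAbs.primeFactors with p ^ q ∣ s.natAbs, p : ℕ) : ℤ) ^ (q - 1) * radical s ≤
      |s| := by
  rw [← Int.radical_natAbs_eq_radical, ← Int.natCast_natAbs]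
  exact_mod_cast prod_pow_mul_radical_le (Int.natAbs_ne_zero.mpr hs) hq

lemma le_rpow_mul_rpow_of_pow_le {x a b s : ℝ} {n : ℕ} (hn : n ≠ 0) (hx : 0 ≤ x) (ha : 0 ≤ a)
    (hb : 0 ≤ b) (h : x ^ n ≤ a * b ^ s) : x ≤ a ^ (n : ℝ)⁻¹ * b ^ (s / n) := by
  rw [div_eq_mul_inv, Real.rpow_mul hb, ← Real.mul_rpow ha (Real.rpow_nonneg hb s)]
  rw [← Real.rpow_natCast] at h
  exact (Real.le_rpow_inv_iff_of_pos hx (by positivity) (by positivity)).mpr h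

theorem stmt13 (habc : ABCConjecture) (F : MvPolynomial (Fin 2) ℤ) (r q : ℕ)
    (hq : 2 ≤ q) (hF : F ≠ 0) (hhom : F.IsHomogeneous r) (hsq : Squarefree F) :
    ∀ ε : ℝ, 0 < ε → ∃ c : ℝ, 0 < c ∧
      ∀ u v : ℤ, IsCoprime u v → MvPolynomial.eval ![u, v] F ≠ 0 →
        ((∏ p ∈ Finset.filter (fun p => p ^ q ∣ (MvPolynomial.eval ![u, v] F).natAbs)
              (MvPolynomial.eval ![u, v] F).natAbs.primeFactors, p : ℕ) : ℝ) ≤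
          c * ((max |u| |v| : ℤ) : ℝ) ^ ((2 + ε) / ((q : ℝ) - 1)) := by
  intro ε hε
  obtain ⟨c, hc, hbound⟩ := habc.exists_max_abs_pow_le hhom hsq hε
  set A : ℤ := ∑ d ∈ F.support, |F.coeff d|
  have hA : (0 : ℝ) < A := mod_cast Finset.sum_pos
    (fun d hd ↦ abs_pos.mpr (MvPolynomial.mem_support_iff.mp hd))
    (MvPolynomial.support_nonempty.mpr hF)
  refine ⟨(A * c) ^ ((q - 1 : ℕ) : ℝ)⁻¹, by positivity, fun u v huv hs ↦ ?_⟩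
  have hR : (0 : ℝ) < (radical (MvPolynomial.eval ![u, v] F) : ℤ) := mod_cast Int.radical_pos _
  have hH : (0 : ℝ) ≤ (max |u| |v| : ℤ) := mod_cast (abs_nonneg u).trans (le_max_left _ _)
  rw [← Nat.cast_pred (by omega)]
  refine le_rpow_mul_rpow_of_pow_le (by omega) (Nat.cast_nonneg _) (by positivity) hH ?_
  refine le_of_mul_le_mul_right ?_ hR
  calc _ ≤ ((|MvPolynomial.eval ![u, v] F| : ℤ) : ℝ) :=
        mod_cast prod_pow_mul_radical_le_abs hs (by omega)
    _ ≤ A * ((max |u| |v| : ℤ) : ℝ) ^ r := mod_cast abs_eval_le_of_isHomogeneous hhom u v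
    _ ≤ A * _ := mul_le_mul_of_nonneg_left (hbound u v huv hs) hA.le
    _ = _ := by ring
end

section
/- Let P ∈ ℤ[T] be a separable polynomial of odd degree and let d be a nonzero squarefree integer. Then for every prime number p there exist t, y ∈ ℚ_p with y ≠ 0 and y² = d·P(t); that is, the twisted hyperelliptic curve y² = d·P(t) has a non-trivial ℚ_p-rational point for every prime p. -/
open Polynomial

/-!
Let `a` be the leading coefficient of `f` and `n = 2k + 1` its degree. As `s → ∞`, `f(as²)` is
asymptotically equivalent to `a(as²)ⁿ = (aᵏ⁺¹sⁿ)²`, so it is a nonzero square times a factor tending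
to `1`. Squaring has the invertible derivative `2` at `1`, so by the inverse function theorem, which
here plays the role of Hensel's lemma, that factor is eventually a nonzero square too.
-/

open Asymptotics Bornology Filter Topology

section CompleteField

variable {K : Type*} [NontriviallyNormedField K] [CompleteSpace K]

theorem eventually_nhds_one_exists_sq_eq (h2 : (2 : K) ≠ 0) :
    ∀ᶠ u in 𝓝 (1 : K), ∃ y ≠ 0, y ^ 2 = u := by
  have hderiv : HasStrictDerivAt (fun y : K ↦ y ^ 2) 2 1 := by
    simpa using hasStrictDerivAt_pow 2 (1 : K)
  have hmap : map (fun y : K ↦ y ^ 2) (𝓝 1) = 𝓝 1 := by simpa using hderiv.map_nhds_eq h2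
  rw [← hmap, eventually_map]
  filter_upwards [eventually_ne_nhds one_ne_zero] with y hy using ⟨y, hy, rfl⟩

theorem eventually_exists_sq_eq_of_isEquivalent_sq {α : Type*} {l : Filter α} {g h : α → K}
    (h2 : (2 : K) ≠ 0) (hgh : g ~[l] fun x ↦ h x ^ 2) (hh : ∀ᶠ x in l, h x ≠ 0) :
    ∀ᶠ x in l, ∃ y ≠ 0, y ^ 2 = g x := by
  obtain ⟨φ, hφ, hg⟩ := hgh.exists_eq_mul
  filter_upwards [hφ.eventually (eventually_nhds_one_exists_sq_eq h2), hg, hh]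
    with x ⟨w, hw, hwφ⟩ hgx hhx
  exact ⟨w * h x, mul_ne_zero hw hhx, by rw [hgx, Pi.mul_apply, ← hwφ, mul_pow]⟩

theorem stmt16_general (h2 : (2 : K) ≠ 0) {f : K[X]} (hodd : Odd f.natDegree) :
    ∃ t y : K, y ≠ 0 ∧ y ^ 2 = f.eval t := by
  obtain ⟨k, hk⟩ := hodd
  set a := f.leadingCoeff with ha_def
  have ha : a ≠ 0 := leadingCoeff_ne_zero.mpr (ne_zero_of_natDegree_gt (n := 0) (by lia))
  have htop : Tendsto (fun s ↦ a * s ^ 2) (cobounded K) (cobounded K) :=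
    (tendsto_mul_left_cobounded ha).comp (tendsto_pow_cobounded_cobounded two_ne_zero)
  have hequiv : (fun s ↦ f.eval (a * s ^ 2)) ~[cobounded K]
      fun s ↦ (a ^ (k + 1) * s ^ f.natDegree) ^ 2 := by
    refine (isEquivalent_cobounded_leading_monomial.comp_tendsto htop).congr_right <|
      .of_forall fun s ↦ ?_
    simp only [Function.comp_apply, hk, ← ha_def]
    ring
  have hne : ∀ᶠ s in cobounded K, a ^ (k + 1) * s ^ f.natDegree ≠ 0 := by
    filter_upwards [eventually_ne_cobounded 0] with s hs using by positivity
  obtain ⟨s, hs⟩ := (eventually_exists_sq_eq_of_isEquivalent_sq h2 hequiv hne).exists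
  exact ⟨a * s ^ 2, hs⟩

end CompleteField

theorem stmt16 (P : Polynomial ℤ) (hP0 : P ≠ 0)
    (hsep : (P.map (Int.castRingHom ℚ)).Separable) (hodd : Odd P.natDegree)
    (d : ℤ) (hd0 : d ≠ 0) (hdsq : ∀ p : ℕ, p.Prime → ¬ ((p : ℤ) ^ 2 ∣ d)) :
    ∀ (p : ℕ) [Fact p.Prime],
      ∃ t y : ℚ_[p], y ≠ 0 ∧ y ^ 2 = (d : ℚ_[p]) * Polynomial.aeval t P := by
  intro p _
  simpa [eval_map_algebraMap, -algebraMap_int_eq] using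
    stmt16_general (K := ℚ_[p]) (f := (C d * P).map (algebraMap ℤ ℚ_[p])) two_ne_zero <| by
      rwa [natDegree_map_eq_of_injective (algebraMap ℤ ℚ_[p]).injective_int, natDegree_C_mul hd0]
end
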